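/- arXiv:2108.02692 — 2 statements merged into one kernel-verified Lean document; each statement's English description precedes it below -/
import Mathlib

section
/- Let G be a finite simple graph, let Q be a MultiSLP equivalent to P_G, and let 𝔊 be the graph on the constants of Q built from the freely appearing constants and freely appearing goal variables of Q. For every temporal variable v of Q: (1) if the value of v is e_x + e_y for two constants x, y ∈ C \ {ρ}, then x ⇌ y in 𝔊; (2) if the value of v is e_{x_1} + e_{x_2} + e_{x_3} + e_{x_4} for four distinct constants in C \ {ρ}, then {x_1, x_2, x_3, x_4} can be partitioned into two pairs {n_1, n_2} and {n_3, n_4} with n_1 ⇌ n_2 and n_3 ⇌ n_4 in 𝔊; (3) if the value of v is e_ρ + e_x + e_y + e_z for three distinct constants x, y, z ∈ C \ {ρ}, then {x, y, z} can be split into a pair {n_1, n_2} with n_1 ⇌ n_2 in 𝔊 and a singleton {n_3} with n_3 ∈ 𝔊_⋆. -/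
/-- Terms of a MultiSLP over a set of constants `C`:
either a constant, or a variable referenced by its statement index. -/
inductive Term (C : Type) where
  | const : C → Term C
  | var : ℕ → Term C
  deriving DecidableEq

/-- A MultiSLP over the constants `C`: a sequence of statements
`v_i ← ⊕(t_{i,1},…,t_{i,n_i})` (statement `i` defines variable `i`, each `n_i ≥ 2`,
and every variable used in statement `i` has index `< i`), followed by a return
list of terms whose variables are all defined. -/
structure MultiSLP (C : Type) where
  stmts : List (List (Term C))
  ret : List (Term C)
  arity : ∀ args ∈ stmts, 2 ≤ args.length
  wfStmts : ∀ i, i < stmts.length → ∀ t ∈ stmts.getD i [], ∀ j, t = Term.var j → j < i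
  wfRet : ∀ t ∈ ret, ∀ j, t = Term.var j → j < stmts.length

/-- The value of a constant `c` is the standard basis vector `e_c` of `GF(2)^C`. -/
def eConst {C : Type} [DecidableEq C] (c : C) : C → ZMod 2 := fun d => if d = c then 1 else 0

/-- Value of a term, given the list of values of the previously defined variables. -/
def Term.eval {C : Type} [DecidableEq C] (env : List (C → ZMod 2)) : Term C → (C → ZMod 2)
  | .const c => eConst c
  | .var j => env.getD j 0

/-- Values of the variables of a MultiSLP: the value of variable `i` is the GF(2)-sum
(XOR) of the values of the arguments of statement `i`. -/
def MultiSLP.envList {C : Type} [DecidableEq C] (P : MultiSLP C) : List (C → ZMod 2) :=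
  P.stmts.foldl (fun env args => env ++ [(args.map (Term.eval env)).sum]) []

/-- The result of a MultiSLP: the tuple of values of its returned terms. -/
def MultiSLP.result {C : Type} [DecidableEq C] (P : MultiSLP C) : List (C → ZMod 2) :=
  P.ret.map (Term.eval P.envList)

/-- The value of variable `i` of a MultiSLP. -/
def MultiSLP.value {C : Type} [DecidableEq C] (P : MultiSLP C) (i : ℕ) : C → ZMod 2 :=
  P.envList.getD i 0

/-- The memory-access cost `#_M(P) = Σ_i (n_i + 1)`. -/
def MultiSLP.costM {C : Type} (P : MultiSLP C) : ℕ :=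
  (P.stmts.map fun args => args.length + 1).sum
/-- The constants used by `P_G`: the fresh constant `ρ`, the nodes of `G`,
and for each node `a` the fresh local nodes `λ_a` and `μ_a`. -/
inductive Const (N : Type) where
  | rho : Const N
  | node : N → Const N
  | lam : N → Const N
  | mu : N → Const N
  deriving DecidableEq

/-- The result of `P_G`: the family of values `e_ρ + e_x + e_y` indexed by the
edges of `G_modif` (first the edges of `G`, enumerated by the list `L`, then for
each node `a` — enumerated by `nodes` — the two local edges `(a,λ_a)` and `(a,μ_a)`).
A MultiSLP `Q` is equivalent to `P_G` iff `Q.result = targetValues L nodes`. -/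
def targetValues {N : Type} [DecidableEq N] (L : List (N × N)) (nodes : List N) :
    List (Const N → ZMod 2) :=
  (L.map fun p =>
    eConst Const.rho + eConst (Const.node p.1) + eConst (Const.node p.2))
  ++ nodes.flatMap fun a =>
      [eConst Const.rho + eConst (Const.node a) + eConst (Const.lam a),
       eConst Const.rho + eConst (Const.node a) + eConst (Const.mu a)]

/-- A constant `c` *freely appears* in `Q` if it occurs as an argument of the defining
statement of some temporal (non-returned) variable of `Q`. -/
def FreeConst {C : Type} (Q : MultiSLP C) (c : C) : Prop :=
  ∃ k, k < Q.stmts.length ∧ Term.var k ∉ Q.ret ∧ Term.const c ∈ Q.stmts.getD k []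

/-- A goal variable `g_{xy}` (a returned variable with value `e_ρ + e_x + e_y`)
*freely appears* in `Q` if it occurs as an argument of the defining statement of some
temporal (non-returned) variable of `Q`. -/
def FreeGoalEdge {N : Type} [DecidableEq N] (Q : MultiSLP (Const N)) (x y : Const N) :
    Prop :=
  ∃ i, i < Q.stmts.length ∧ Term.var i ∈ Q.ret ∧
    Q.value i = eConst Const.rho + eConst x + eConst y ∧
    ∃ k, k < Q.stmts.length ∧ Term.var k ∉ Q.ret ∧ Term.var i ∈ Q.stmts.getD k []

/-- The edge relation of the graph `𝔊` on the constants of `Q`: every pair of distinct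
freely appearing constants is joined, and for every freely appearing goal variable
`g_{xy}` the constants `x` and `y` are joined. -/
def GGAdj {N : Type} [DecidableEq N] (Q : MultiSLP (Const N)) (c d : Const N) : Prop :=
  c ≠ d ∧ ((FreeConst Q c ∧ FreeConst Q d) ∨ FreeGoalEdge Q c d ∨ FreeGoalEdge Q d c)

/-- `x ⇌ y`: the constants `x` and `y` are joined by a path in `𝔊`. -/
def GGConn {N : Type} [DecidableEq N] (Q : MultiSLP (Const N)) (x y : Const N) : Prop :=
  Relation.ReflTransGen (GGAdj Q) x y

/-- `c ∈ 𝔊_⋆`: `c` lies in the connected component of `𝔊` containing the freely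
appearing constants. -/
def InStar {N : Type} [DecidableEq N] (Q : MultiSLP (Const N)) (c : Const N) : Prop :=
  ∃ c₀, FreeConst Q c₀ ∧ GGConn Q c₀ c

/-- The list of values produced by a list of statements. -/
def envOf {C : Type} [DecidableEq C] (l : List (List (Term C))) : List (C → ZMod 2) :=
  l.foldl (fun env args => env ++ [(args.map (Term.eval env)).sum]) []

theorem envOf_append {C : Type} [DecidableEq C] (l : List (List (Term C))) (a : List (Term C)) :
    envOf (l ++ [a]) = envOf l ++ [(a.map (Term.eval (envOf l))).sum] := by
  simp [envOf, List.foldl_append]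

theorem envOf_length {C : Type} [DecidableEq C] (l : List (List (Term C))) :
    (envOf l).length = l.length := by
  induction l using List.reverseRecOn with
  | nil => rfl
  | append_singleton l a ih => rw [envOf_append]; simp [ih]

theorem eval_append {C : Type} [DecidableEq C] (E F : List (C → ZMod 2)) (a : List (Term C))
    (h : ∀ t ∈ a, ∀ j, t = Term.var j → j < E.length) :
    a.map (Term.eval (E ++ F)) = a.map (Term.eval E) := by
  apply List.map_congr_left
  intro t ht
  cases t with
  | const c => rfl
  | var j =>
    have := h _ ht j rfl
    simp only [Term.eval]
    exact List.getD_append _ _ _ _ this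

theorem envOf_getD {C : Type} [DecidableEq C] (l : List (List (Term C))) :
    (∀ i, i < l.length → ∀ t ∈ l.getD i [], ∀ j, t = Term.var j → j < i) →
    ∀ i, i < l.length →
      (envOf l).getD i 0 = ((l.getD i []).map (Term.eval (envOf l))).sum := by
  induction l using List.reverseRecOn with
  | nil => intro _ i hi; simp at hi
  | append_singleton l a ih =>
    intro hwf i hi
    have hlen := envOf_length l
    have hb := hwf i hi
    rw [envOf_append]
    rw [List.length_append, List.length_singleton] at hi
    rcases Nat.lt_succ_iff_lt_or_eq.mp hi with h | h
    · rw [List.getD_append _ _ _ _ h] at hb ⊢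
      rw [List.getD_append _ _ _ _ (by omega), eval_append]
      · apply ih _ i h
        intro k hk
        have := hwf k (by simp; omega)
        rwa [List.getD_append _ _ _ _ hk] at this
      · intro t ht j hj
        have := hb t ht j hj
        omega
    · subst h
      have e : (l ++ [a]).getD l.length [] = a := by simp
      rw [e] at hb ⊢
      rw [eval_append _ _ _ (by rw [hlen]; exact hb)]
      rw [← hlen]
      simp

theorem value_eq {C : Type} [DecidableEq C] (Q : MultiSLP C) (i : ℕ) (hi : i < Q.stmts.length) :
    Q.value i = ((Q.stmts.getD i []).map (Term.eval Q.envList)).sum :=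
  envOf_getD Q.stmts Q.wfStmts i hi

theorem Const.finite_inst (N : Type) [Finite N] : Finite (Const N) := by
  let f : Const N → Option (N ⊕ N ⊕ N) := fun c => match c with
    | .rho => none
    | .node a => some (.inl a)
    | .lam a => some (.inr (.inl a))
    | .mu a => some (.inr (.inr a))
  apply Finite.of_injective f
  intro a b h
  cases a <;> cases b <;> simp_all [f]

open Classical in
/-- Parity of the support of a vector on a set. -/
noncomputable def par {C : Type} [Fintype C] (K : C → Prop) : (C → ZMod 2) →+ ZMod 2 where
  toFun f := ∑ c, if K c then f c else 0
  map_zero' := by simp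
  map_add' f g := by
    rw [← Finset.sum_add_distrib]
    apply Finset.sum_congr rfl
    intro c _
    split_ifs <;> simp

open Classical in
theorem par_eConst {C : Type} [Fintype C] [DecidableEq C] (K : C → Prop) (x : C) :
    par K (eConst x) = if K x then 1 else 0 := by
  change (∑ c, if K c then eConst x c else 0) = _
  rw [Finset.sum_eq_single x]
  · simp [eConst]
  · intro b _ hb
    simp [eConst, hb]
  · simp

section
variable {N : Type} [DecidableEq N] (Q : MultiSLP (Const N))

theorem GGAdj.symm' {Q : MultiSLP (Const N)} {x y : Const N} (h : GGAdj Q x y) : GGAdj Q y x :=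
  ⟨h.1.symm, by rcases h.2 with h | h | h <;> tauto⟩

theorem GGConn.symm' {Q : MultiSLP (Const N)} {x y : Const N} (h : GGConn Q x y) :
    GGConn Q y x :=
  by
  induction h with
  | refl => exact Relation.ReflTransGen.refl
  | tail _ h ih => exact Relation.ReflTransGen.head (GGAdj.symm' h) ih

theorem GGConn.trans' {Q : MultiSLP (Const N)} {x y z : Const N} (h : GGConn Q x y)
    (h' : GGConn Q y z) : GGConn Q x z := Relation.ReflTransGen.trans h h'

theorem star_conn {Q : MultiSLP (Const N)} {x y : Const N} (h : InStar Q x) (h' : InStar Q y) :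
    GGConn Q x y := by
  obtain ⟨a, ha, hax⟩ := h
  obtain ⟨b, hb, hby⟩ := h'
  refine hax.symm'.trans' (GGConn.trans' ?_ hby)
  by_cases e : a = b
  · subst e; exact Relation.ReflTransGen.refl
  · exact Relation.ReflTransGen.single ⟨e, Or.inl ⟨ha, hb⟩⟩

theorem star_of_conn {Q : MultiSLP (Const N)} {x y : Const N} (h : InStar Q x)
    (h' : GGConn Q x y) : InStar Q y := by
  obtain ⟨a, ha, hax⟩ := h
  exact ⟨a, ha, hax.trans' h'⟩

theorem goal_value (L : List (N × N)) (nodes : List N)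
    (hQ : Q.result = targetValues L nodes) (i : ℕ) (hi : Term.var i ∈ Q.ret) :
    ∃ x y : Const N, x ≠ Const.rho ∧ y ≠ Const.rho ∧
      Q.value i = eConst Const.rho + eConst x + eConst y := by
  have h : Q.value i ∈ Q.result := List.mem_map.mpr ⟨_, hi, rfl⟩
  rw [hQ, targetValues, List.mem_append] at h
  rcases h with h | h
  · obtain ⟨p, _, hp⟩ := List.mem_map.mp h
    exact ⟨_, _, by simp, by simp, hp.symm⟩
  · obtain ⟨a, _, ha⟩ := List.mem_flatMap.mp h
    simp only [List.mem_cons, List.not_mem_nil, or_false] at ha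
    rcases ha with ha | ha
    · exact ⟨_, _, by simp, by simp, ha⟩
    · exact ⟨_, _, by simp, by simp, ha⟩

theorem par_value [Fintype (Const N)] (L : List (N × N)) (nodes : List N)
    (hQ : Q.result = targetValues L nodes) (x : Const N) (hx : ¬ InStar Q x) (v : ℕ) :
    v < Q.stmts.length → Term.var v ∉ Q.ret →
    par (fun c => c ≠ Const.rho ∧ GGConn Q x c) (Q.value v) = 0 := by
  induction v using Nat.strong_induction_on with
  | _ v ih =>
    intro hv hvt
    rw [value_eq Q v hv, map_list_sum, List.map_map]
    apply List.sum_eq_zero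
    intro w hw
    obtain ⟨t, ht, rfl⟩ := List.mem_map.mp hw
    simp only [Function.comp]
    cases t with
    | const c =>
      simp only [Term.eval]
      rw [par_eConst, if_neg]
      rintro ⟨_, h⟩
      exact hx ⟨c, ⟨v, hv, hvt, ht⟩, h.symm'⟩
    | var j =>
      have hj := Q.wfStmts v hv _ ht j rfl
      change par _ (Q.value j) = 0
      by_cases hr : Term.var j ∈ Q.ret
      · obtain ⟨a, b, ha, hb, hab⟩ := goal_value Q L nodes hQ j hr
        have hc : GGConn Q a b := by
          by_cases e : a = b
          · subst e; exact Relation.ReflTransGen.refl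
          · exact Relation.ReflTransGen.single
              ⟨e, Or.inr (Or.inl ⟨j, by omega, hr, hab, v, hv, hvt, ht⟩)⟩
        rw [hab, map_add, map_add, par_eConst, par_eConst, par_eConst]
        have hiff : GGConn Q x a ↔ GGConn Q x b :=
          ⟨fun h => h.trans' hc, fun h => h.trans' hc.symm'⟩
        by_cases h : GGConn Q x b
        · simp [ha, hb, hiff, h]; decide
        · simp [hiff, h]
      · exact ih j hj (by omega) hr
end

/-- **Proposition A2 of the appendix.**  Let `G` be a finite simple graph (with `L`
enumerating the edges and `nodes` enumerating the node set), let `Q` be a MultiSLP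
equivalent to `P_G`, and let `𝔊` be the graph on the constants of `Q` built from the
freely appearing constants and freely appearing goal variables of `Q`.  For every
temporal variable `v` of `Q`:
(1) if the value of `v` is `e_x + e_y` for two constants `x, y ≠ ρ`, then `x ⇌ y`;
(2) if the value of `v` is `e_{x₁} + e_{x₂} + e_{x₃} + e_{x₄}` for four distinct
constants `≠ ρ`, then `{x₁,x₂,x₃,x₄}` splits into two pairs `{n₁,n₂}` and `{n₃,n₄}`
with `n₁ ⇌ n₂` and `n₃ ⇌ n₄`;
(3) if the value of `v` is `e_ρ + e_x + e_y + e_z` for three distinct constants `≠ ρ`,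
then `{x,y,z}` splits into a pair `{n₁,n₂}` with `n₁ ⇌ n₂` and a point `n₃ ∈ 𝔊_⋆`. -/
theorem temporal_value_paths {N : Type} [Fintype N] [DecidableEq N]
    (G : SimpleGraph N) [DecidableRel G.Adj]
    (L : List (N × N)) (nodes : List N)
    (hnodesN : nodes.Nodup) (hnodesA : ∀ a : N, a ∈ nodes)
    (hLN : (L.map fun p => s(p.1, p.2)).Nodup)
    (hLadj : ∀ p ∈ L, G.Adj p.1 p.2)
    (hLall : ∀ a b : N, G.Adj a b → s(a, b) ∈ L.map fun p => s(p.1, p.2))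
    (Q : MultiSLP (Const N)) (hQ : Q.result = targetValues L nodes)
    (v : ℕ) (hv : v < Q.stmts.length) (hvtemp : Term.var v ∉ Q.ret) :
    (∀ x y : Const N, x ≠ Const.rho → y ≠ Const.rho → x ≠ y →
      Q.value v = eConst x + eConst y → GGConn Q x y) ∧
    (∀ x₁ x₂ x₃ x₄ : Const N,
      x₁ ≠ Const.rho → x₂ ≠ Const.rho → x₃ ≠ Const.rho → x₄ ≠ Const.rho →
      x₁ ≠ x₂ → x₁ ≠ x₃ → x₁ ≠ x₄ → x₂ ≠ x₃ → x₂ ≠ x₄ → x₃ ≠ x₄ →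
      Q.value v = eConst x₁ + eConst x₂ + eConst x₃ + eConst x₄ →
      ∃ n₁ n₂ n₃ n₄ : Const N,
        ({x₁, x₂, x₃, x₄} : Finset (Const N)) = {n₁, n₂, n₃, n₄} ∧
        GGConn Q n₁ n₂ ∧ GGConn Q n₃ n₄) ∧
    (∀ x y z : Const N, x ≠ Const.rho → y ≠ Const.rho → z ≠ Const.rho →
      x ≠ y → x ≠ z → y ≠ z →
      Q.value v = eConst Const.rho + eConst x + eConst y + eConst z →
      ∃ n₁ n₂ n₃ : Const N,
        ({x, y, z} : Finset (Const N)) = {n₁, n₂, n₃} ∧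
        GGConn Q n₁ n₂ ∧ InStar Q n₃) := by
  have : Finite (Const N) := Const.finite_inst N
  have : Fintype (Const N) := Fintype.ofFinite _
  have key : ∀ x, ¬ InStar Q x →
      par (fun c => c ≠ Const.rho ∧ GGConn Q x c) (Q.value v) = 0 :=
    fun x hx => par_value Q L nodes hQ x hx v hv hvtemp
  have rf : ∀ x, GGConn Q x x := fun x => Relation.ReflTransGen.refl
  have sy : ∀ x y, GGConn Q x y → GGConn Q y x := fun x y h => h.symm'
  have tr : ∀ x y z, GGConn Q x y → GGConn Q y z → GGConn Q x z := fun x y z h h' => h.trans' h'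
  have st : ∀ x y, InStar Q x → InStar Q y → GGConn Q x y := fun x y h h' => star_conn h h'
  have so : ∀ x y, InStar Q x → GGConn Q x y → InStar Q y := fun x y h h' => star_of_conn h h'
  have z1 : (1 : ZMod 2) ≠ 0 := by decide
  have z2 : (1 : ZMod 2) + 1 = 0 := by decide
  refine ⟨?_, ?_, ?_⟩
  · intro x y hx hy hxy hval
    have F : ∀ u, ¬ InStar Q u → (GGConn Q u x ↔ GGConn Q u y) := by
      intro u hu
      have h := key u hu
      rw [hval] at h
      simp only [map_add, par_eConst, hx, hy, ne_eq, not_false_eq_true, true_and] at h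
      by_cases h1 : GGConn Q u x <;> by_cases h2 : GGConn Q u y <;> simp_all
    by_cases h1 : InStar Q x
    · by_cases h2 : InStar Q y
      · exact st _ _ h1 h2
      · exact sy _ _ ((F y h2).2 (rf y))
    · exact (F x h1).1 (rf x)
  · intro a b c d ha hb hc hd hab hac had hbc hbd hcd hval
    have F : ∀ u, ¬ InStar Q u →
        ((GGConn Q u a ↔ GGConn Q u b) ↔ (GGConn Q u c ↔ GGConn Q u d)) := by
      intro u hu
      have h := key u hu
      rw [hval] at h
      simp only [map_add, par_eConst, ha, hb, hc, hd, ne_eq, not_false_eq_true, true_and] at h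
      by_cases h1 : GGConn Q u a <;> by_cases h2 : GGConn Q u b <;>
        by_cases h3 : GGConn Q u c <;> by_cases h4 : GGConn Q u d <;>
        simp [ha, hb, hc, hd, h1, h2, h3, h4] at h ⊢ <;> revert h <;> decide
    have main : (GGConn Q a b ∧ GGConn Q c d) ∨ (GGConn Q a c ∧ GGConn Q b d) ∨
        (GGConn Q a d ∧ GGConn Q b c) := by
      have Fa := F a
      have Fb := F b
      have Fc := F c
      have Fd := F d
      clear F key hval hLall hLadj hLN hQ hnodesA hnodesN
      by_cases h1 : GGConn Q a b <;> by_cases h2 : GGConn Q a c <;>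
        by_cases h3 : GGConn Q a d <;> by_cases h4 : GGConn Q b c <;>
        by_cases h5 : GGConn Q b d <;> by_cases h6 : GGConn Q c d <;> grind
    rcases main with h | h | h
    · exact ⟨a, b, c, d, rfl, h⟩
    · exact ⟨a, c, b, d, by ext t; simp; tauto, h⟩
    · exact ⟨a, d, b, c, by ext t; simp; tauto, h⟩
  · intro a b c ha hb hc hab hac hbc hval
    have F : ∀ u, ¬ InStar Q u →
        ((GGConn Q u a ↔ GGConn Q u b) ↔ ¬ GGConn Q u c) := by
      intro u hu
      have h := key u hu
      rw [hval] at h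
      simp only [map_add, par_eConst, ha, hb, hc, ne_eq, not_false_eq_true, true_and,
        not_true_eq_false, false_and, if_false] at h
      by_cases h1 : GGConn Q u a <;> by_cases h2 : GGConn Q u b <;>
        by_cases h3 : GGConn Q u c <;>
        simp [ha, hb, hc, h1, h2, h3] at h ⊢ <;> revert h <;> decide
    have main : (GGConn Q a b ∧ InStar Q c) ∨ (GGConn Q a c ∧ InStar Q b) ∨
        (GGConn Q b c ∧ InStar Q a) := by
      have Fa := F a
      have Fb := F b
      have Fc := F c
      clear F key hval hLall hLadj hLN hQ hnodesA hnodesN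
      by_cases h1 : GGConn Q a b <;> by_cases h2 : GGConn Q a c <;>
        by_cases h4 : GGConn Q b c <;> grind
    rcases main with h | h | h
    · exact ⟨a, b, c, rfl, h⟩
    · exact ⟨a, c, b, by ext t; simp; tauto, h⟩
    · exact ⟨b, c, a, by ext t; simp; tauto, h⟩
end

section
/- Let F be a field, let n, p be natural numbers, let α : Fin (n+p) → F be injective, and let V be the (n+p) × n matrix over F with entries V i j = (α i)^j (a Vandermonde coding matrix). Then for every injective map r : Fin n → Fin (n+p), the n × n submatrix M of V obtained by selecting the rows r(0), …, r(n−1) (i.e., M = V.submatrix r id) is invertible; moreover, for every data matrix D with n rows over F, decoding recovers the data: M⁻¹ * ((V * D).submatrix r id) = D. -/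
/-- **Reed–Solomon decoding via Vandermonde matrices.**  Let `F` be a field, let
`α : Fin (n+p) → F` be injective, and let `V` be the `(n+p) × n` Vandermonde coding
matrix `V i j = (α i)^j`.  Then for every injective `r : Fin n → Fin (n+p)`, the
`n × n` submatrix `M = V.submatrix r id` (the rows surviving the erasures) is
invertible, and for every data matrix `D` with `n` rows, decoding recovers the data:
`M⁻¹ * ((V * D).submatrix r id) = D`. -/
theorem vandermonde_erasure_decoding {F : Type} [Field F] (n p : ℕ)
    (α : Fin (n + p) → F) (hα : Function.Injective α)
    (V : Matrix (Fin (n + p)) (Fin n) F) (hV : ∀ i j, V i j = α i ^ (j : ℕ))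
    (r : Fin n → Fin (n + p)) (hr : Function.Injective r) :
    IsUnit (V.submatrix r id) ∧
    ∀ (k : ℕ) (D : Matrix (Fin n) (Fin k) F),
      (V.submatrix r id)⁻¹ * ((V * D).submatrix r id) = D := by
  have hM : V.submatrix r id = Matrix.vandermonde (α ∘ r) := by
    ext i j
    simp [hV, Matrix.vandermonde_apply]
  have hdet : IsUnit (V.submatrix r id).det := by
    rw [hM, isUnit_iff_ne_zero]
    exact Matrix.det_vandermonde_ne_zero_iff.mpr (hα.comp hr)
  refine ⟨(Matrix.isUnit_iff_isUnit_det _).mpr hdet, fun k D => ?_⟩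
  have hmul : (V * D).submatrix r id = V.submatrix r id * D := by
    ext i j
    simp [Matrix.mul_apply]
  rw [hmul, Matrix.nonsing_inv_mul_cancel_left _ _ hdet]
end
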